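/- arXiv:1812.07450 — 5 statements merged into one kernel-verified Lean document; each statement's English description precedes it below -/
import Mathlib

section
/- Let A : H₁ → H₂ be a nonzero bounded linear operator between real Hilbert spaces with adjoint A*, let ρ ≥ 0, and let T : H₂ → H₂ be ρ-strongly quasi-nonexpansive with im A ∩ Fix T ≠ ∅. Then the Landweber operator L{T} is ρ-strongly quasi-nonexpansive and Fix L{T} = A⁻¹(Fix T). -/
/-!
For `w ∈ Fix T` and `d = T y - y`, expanding the square turns the `ρ`-SQNE inequality into
`2⟪y - w, d⟫ + (1 + ρ)‖d‖² ≤ 0`. With `y = A x` and `w = A z`, the inner product is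
`⟪x - z, A* d⟫`. If `A* d = 0` this forces `d = 0`, whence `Fix L{T} = A⁻¹(Fix T)`; and since
`‖A‖⁻² ‖A* d‖² ≤ ‖d‖²`, the same inequality holds for `L{T}x - x = ‖A‖⁻² A* d`.
-/

/-- The Landweber operator `L{T}x := x + ‖A‖⁻² A*(T(Ax) − Ax)`. -/
noncomputable def landweber {H₁ H₂ : Type*}
    [NormedAddCommGroup H₁] [InnerProductSpace ℝ H₁] [CompleteSpace H₁]
    [NormedAddCommGroup H₂] [InnerProductSpace ℝ H₂] [CompleteSpace H₂]
    (A : H₁ →L[ℝ] H₂) (T : H₂ → H₂) (x : H₁) : H₁ :=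
  x + (‖A‖ ^ 2)⁻¹ • (ContinuousLinearMap.adjoint A) (T (A x) - A x)

/-- The pointwise `ρ`-SQNE inequality in terms of the displacement `d`. -/
lemma sqne_iff_inner {H : Type*} [NormedAddCommGroup H] [InnerProductSpace ℝ H]
    (ρ : ℝ) (y w d : H) :
    ‖y + d - w‖ ^ 2 ≤ ‖y - w‖ ^ 2 - ρ * ‖d‖ ^ 2 ↔
      2 * inner ℝ (y - w) d + (1 + ρ) * ‖d‖ ^ 2 ≤ 0 := by
  rw [add_sub_right_comm, norm_add_sq_real]
  constructor <;> intro h <;> linarith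

/-- If `T` is ρ-strongly quasi-nonexpansive and `im A ∩ Fix T ≠ ∅`, then the
Landweber operator `L{T}` is ρ-strongly quasi-nonexpansive and `Fix L{T} = A⁻¹(Fix T)`. -/
theorem landweber_sqne
    {H₁ H₂ : Type*} [NormedAddCommGroup H₁] [InnerProductSpace ℝ H₁] [CompleteSpace H₁]
    [NormedAddCommGroup H₂] [InnerProductSpace ℝ H₂] [CompleteSpace H₂]
    (A : H₁ →L[ℝ] H₂) (hA : A ≠ 0) (ρ : ℝ) (hρ : 0 ≤ ρ) (T : H₂ → H₂)
    (hT : ∀ x : H₂, ∀ z ∈ Function.fixedPoints T,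
      ‖T x - z‖ ^ 2 ≤ ‖x - z‖ ^ 2 - ρ * ‖T x - x‖ ^ 2)
    (hfix : (Set.range A ∩ Function.fixedPoints T).Nonempty) :
    (∀ x : H₁, ∀ z ∈ Function.fixedPoints (landweber A T),
      ‖landweber A T x - z‖ ^ 2 ≤ ‖x - z‖ ^ 2 - ρ * ‖landweber A T x - x‖ ^ 2) ∧
    Function.fixedPoints (landweber A T) = A ⁻¹' (Function.fixedPoints T) := by
  have key : ∀ x z : H₁, A z ∈ Function.fixedPoints T →
      2 * inner ℝ (x - z) (ContinuousLinearMap.adjoint A (T (A x) - A x))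
        + (1 + ρ) * ‖T (A x) - A x‖ ^ 2 ≤ 0 := by
    intro x z hz
    rw [ContinuousLinearMap.adjoint_inner_right, map_sub]
    refine (sqne_iff_inner ρ (A x) (A z) _).1 ?_
    rw [add_sub_cancel]
    exact hT (A x) (A z) hz
  have hc : 0 < (‖A‖ ^ 2)⁻¹ := by
    have := norm_pos_iff.2 hA
    positivity
  have hF : Function.fixedPoints (landweber A T) = A ⁻¹' (Function.fixedPoints T) := by
    ext x
    simp only [Set.mem_preimage, Function.mem_fixedPoints, Function.IsFixedPt, landweber,
      add_eq_left, smul_eq_zero, hc.ne', false_or]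
    constructor
    · intro h
      obtain ⟨_, ⟨z, rfl⟩, hz⟩ := hfix
      have hk := key x z hz
      rw [h, inner_zero_right] at hk
      have h0 : ‖T (A x) - A x‖ ^ 2 = 0 :=
        le_antisymm (by nlinarith [sq_nonneg ‖T (A x) - A x‖]) (sq_nonneg _)
      exact sub_eq_zero.1 (norm_eq_zero.1 (pow_eq_zero_iff two_ne_zero |>.1 h0))
    · intro h
      rw [h, sub_self, map_zero]
  refine ⟨fun x z hz => ?_, hF⟩
  rw [hF] at hz
  have hk := key x z hz
  unfold landweber
  rw [add_sub_cancel_left, sqne_iff_inner, inner_smul_right, norm_smul, Real.norm_of_nonneg hc.le]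
  set d := T (A x) - A x
  set c := (‖A‖ ^ 2)⁻¹ with hc_def
  have hb : c * ‖ContinuousLinearMap.adjoint A d‖ ^ 2 ≤ ‖d‖ ^ 2 := by
    have h1 : ‖ContinuousLinearMap.adjoint A d‖ ≤ ‖A‖ * ‖d‖ := by
      simpa using (ContinuousLinearMap.adjoint A).le_opNorm d
    have h2 := pow_le_pow_left₀ (norm_nonneg _) h1 2
    rw [hc_def, inv_mul_le_iff₀ (inv_pos.1 hc), ← mul_pow]
    exact h2
  calc _ = c * (2 * inner ℝ (x - z) (ContinuousLinearMap.adjoint A d)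
          + (1 + ρ) * (c * ‖ContinuousLinearMap.adjoint A d‖ ^ 2)) := by ring
    _ ≤ c * (2 * inner ℝ (x - z) (ContinuousLinearMap.adjoint A d)
          + (1 + ρ) * ‖d‖ ^ 2) := by gcongr
    _ ≤ 0 := mul_nonpos_of_nonneg_of_nonpos hc.le hk
end

section
/- Let A : H₁ → H₂ be a nonzero bounded linear operator between real Hilbert spaces with adjoint A*, let ρ ≥ 0, and let T : H₂ → H₂ be ρ-strongly quasi-nonexpansive with im A ∩ Fix T ≠ ∅. Then for every x ∈ H₁, ‖T(Ax) − Ax‖² ≤ (2‖A‖²/(ρ+1)) · ‖L{T}x − x‖ · d(x, Fix L{T}), where L{T} is the Landweber operator of T. -/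
lemma sqne_inner {H : Type*} [NormedAddCommGroup H] [InnerProductSpace ℝ H]
    {ρ : ℝ} {y u t : H} (h : ‖t - u‖ ^ 2 ≤ ‖y - u‖ ^ 2 - ρ * ‖t - y‖ ^ 2) :
    (ρ + 1) / 2 * ‖t - y‖ ^ 2 ≤ inner ℝ (t - y) (u - y) := by
  have e : t - u = (t - y) - (u - y) := by abel
  rw [e, norm_sub_sq_real, norm_sub_rev y u] at h
  linarith

section

variable {H₁ H₂ : Type*} [NormedAddCommGroup H₁] [InnerProductSpace ℝ H₁] [CompleteSpace H₁]
  [NormedAddCommGroup H₂] [InnerProductSpace ℝ H₂] [CompleteSpace H₂]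

lemma landweber_inner (A : H₁ →L[ℝ] H₂) (hA : A ≠ 0) (T : H₂ → H₂) (x z : H₁) :
    inner ℝ (T (A x) - A x) (A z - A x) = ‖A‖ ^ 2 * inner ℝ (landweber A T x - x) (z - x) := by
  have h : ‖A‖ ^ 2 ≠ 0 := pow_ne_zero 2 (norm_ne_zero_iff.mpr hA)
  rw [landweber, add_sub_cancel_left, real_inner_smul_left, mul_inv_cancel_left₀ h,
    ContinuousLinearMap.adjoint_inner_left, map_sub]

/-- `A` maps fixed points of `L{T}` to fixed points of `T`, as soon as `T` has some fixed point in
the range of `A`. -/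
lemma map_mem_fixedPoints (A : H₁ →L[ℝ] H₂) (hA : A ≠ 0) {ρ : ℝ} (hρ : 0 ≤ ρ) {T : H₂ → H₂}
    (hT : ∀ x : H₂, ∀ z ∈ Function.fixedPoints T,
      ‖T x - z‖ ^ 2 ≤ ‖x - z‖ ^ 2 - ρ * ‖T x - x‖ ^ 2)
    {w : H₁} (hw : A w ∈ Function.fixedPoints T)
    {z : H₁} (hz : z ∈ Function.fixedPoints (landweber A T)) :
    A z ∈ Function.fixedPoints T := by
  have h := sqne_inner (hT (A z) (A w) hw)
  have hz' : landweber A T z = z := hz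
  rw [landweber_inner A hA, hz', sub_self, inner_zero_left, mul_zero] at h
  have h0 : ‖T (A z) - A z‖ ^ 2 ≤ 0 := by nlinarith [sq_nonneg ‖T (A z) - A z‖]
  have h1 : ‖T (A z) - A z‖ = 0 := pow_eq_zero_iff two_ne_zero |>.mp (le_antisymm h0 (sq_nonneg _))
  exact sub_eq_zero.mp (norm_eq_zero.mp h1)

end

/-- If `T` is ρ-SQNE with `im A ∩ Fix T ≠ ∅`, then for every `x`,
`‖T(Ax) − Ax‖² ≤ (2‖A‖²/(ρ+1)) ‖L{T}x − x‖ d(x, Fix L{T})`. -/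
theorem landweber_residual_estimate
    {H₁ H₂ : Type*} [NormedAddCommGroup H₁] [InnerProductSpace ℝ H₁] [CompleteSpace H₁]
    [NormedAddCommGroup H₂] [InnerProductSpace ℝ H₂] [CompleteSpace H₂]
    (A : H₁ →L[ℝ] H₂) (hA : A ≠ 0) (ρ : ℝ) (hρ : 0 ≤ ρ) (T : H₂ → H₂)
    (hT : ∀ x : H₂, ∀ z ∈ Function.fixedPoints T,
      ‖T x - z‖ ^ 2 ≤ ‖x - z‖ ^ 2 - ρ * ‖T x - x‖ ^ 2)
    (hfix : (Set.range A ∩ Function.fixedPoints T).Nonempty) :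
    ∀ x : H₁,
      ‖T (A x) - A x‖ ^ 2 ≤
        (2 * ‖A‖ ^ 2 / (ρ + 1)) * ‖landweber A T x - x‖ *
          Metric.infDist x (Function.fixedPoints (landweber A T)) := by
  intro x
  obtain ⟨_, ⟨w, rfl⟩, hw⟩ := hfix
  have hwL : w ∈ Function.fixedPoints (landweber A T) := by
    have hw' : T (A w) = A w := hw
    simp [Function.mem_fixedPoints, Function.IsFixedPt, landweber, hw']
  have key : ∀ z ∈ Function.fixedPoints (landweber A T),
      ‖T (A x) - A x‖ ^ 2 ≤ (2 * ‖A‖ ^ 2 / (ρ + 1)) * ‖landweber A T x - x‖ * dist x z := by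
    intro z hz
    have h := sqne_inner (hT (A x) (A z) (map_mem_fixedPoints A hA hρ hT hw hz))
    rw [landweber_inner A hA] at h
    have hcs := mul_le_mul_of_nonneg_left (real_inner_le_norm (landweber A T x - x) (z - x))
      (sq_nonneg ‖A‖)
    rw [dist_comm, dist_eq_norm, div_mul_eq_mul_div, div_mul_eq_mul_div,
      le_div_iff₀ (by linarith)]
    linarith
  have hC : 0 ≤ (2 * ‖A‖ ^ 2 / (ρ + 1)) * ‖landweber A T x - x‖ := by positivity
  rcases hC.eq_or_lt with h0 | hpos
  · simpa [← h0] using key w hwL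
  · rw [← div_le_iff₀' hpos, Metric.le_infDist ⟨w, hwL⟩]
    intro z hz
    rw [div_le_iff₀' hpos]
    exact key z hz
end

section
/- Let A : H₁ → H₂ be a nonzero bounded linear operator between real Hilbert spaces with adjoint A* and closed range, let ρ ≥ 0, let T : H₂ → H₂ be ρ-strongly quasi-nonexpansive with im A ∩ Fix T ≠ ∅, and let S ⊆ H₂ be nonempty and bounded. Assume that T is regular over S and that the family {im A, Fix T} is regular over S. Then the Landweber operator L{T} is regular over A⁻¹(S); that is, for every sequence (x_k) in A⁻¹(S) with ‖L{T}x_k − x_k‖ → 0, one has d(x_k, Fix L{T}) → 0. -/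
/-!
Closed range makes `A` boundedly invertible onto its image: every `y ∈ im A` has a preimage `v` with
`‖v‖ ≤ C ‖y‖` (open mapping theorem). Put `u = T(Ax) − Ax` and fix `z ∈ im A ∩ Fix T`. Expanding the
quasi-nonexpansiveness inequality gives `‖u‖² ≤ −2⟪u, Ax − z⟫`, and writing `Ax − z = Av` turns the
right-hand side into `−2⟪A*u, v⟫ ≤ 2C ‖A*u‖ ‖Ax − z‖`. On `A⁻¹(S)` the last factor is bounded, so
`‖L{T}x_k − x_k‖ → 0`, that is `A*u_k → 0`, forces `u_k → 0`. The two regularity hypotheses then give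
`d(Ax_k, im A ∩ Fix T) → 0`, and bounded preimages transfer this to
`d(x_k, A⁻¹(Fix T)) ≤ C d(Ax_k, im A ∩ Fix T)`, where `A⁻¹(Fix T) ⊆ Fix L{T}`.
-/

open Filter Topology Metric

/-- The open mapping theorem for an operator with closed range. -/
lemma exists_preimage_bound_of_isClosed_range {H₁ H₂ : Type*}
    [NormedAddCommGroup H₁] [InnerProductSpace ℝ H₁] [CompleteSpace H₁]
    [NormedAddCommGroup H₂] [InnerProductSpace ℝ H₂] [CompleteSpace H₂]
    (A : H₁ →L[ℝ] H₂) (hclosed : IsClosed (Set.range A)) :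
    ∃ C > 0, ∀ w : H₁, ∃ v : H₁, A v = A w ∧ ‖v‖ ≤ C * ‖A w‖ := by
  have hc : IsClosed (A.range : Set H₂) := by
    rw [LinearMap.coe_range]
    exact hclosed
  have : CompleteSpace A.range := hc.completeSpace_coe
  obtain ⟨C, hC, h⟩ := A.rangeRestrict.exists_preimage_norm_le
    (LinearMap.surjective_rangeRestrict (A : H₁ →ₗ[ℝ] H₂))
  refine ⟨C, hC, fun w => ?_⟩
  obtain ⟨v, hv, hn⟩ := h (A.rangeRestrict w)
  exact ⟨v, congrArg Subtype.val hv, hn⟩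

/-- If `T` does not move `A x` away from `A w`, then the residual `T(Ax) − Ax` is controlled by its
image under `A*`. The hypothesis `h` is quasi-nonexpansiveness when `A w` is a fixed point of `T`;
`C` is a preimage bound for `A`. -/
lemma norm_sq_residual_le {H₁ H₂ : Type*}
    [NormedAddCommGroup H₁] [InnerProductSpace ℝ H₁] [CompleteSpace H₁]
    [NormedAddCommGroup H₂] [InnerProductSpace ℝ H₂] [CompleteSpace H₂]
    (A : H₁ →L[ℝ] H₂) (T : H₂ → H₂) {C : ℝ}
    (hC : ∀ w : H₁, ∃ v : H₁, A v = A w ∧ ‖v‖ ≤ C * ‖A w‖) (x w : H₁)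
    (h : ‖T (A x) - A w‖ ^ 2 ≤ ‖A x - A w‖ ^ 2) :
    ‖T (A x) - A x‖ ^ 2 ≤
      2 * ‖ContinuousLinearMap.adjoint A (T (A x) - A x)‖ * (C * ‖A x - A w‖) := by
  obtain ⟨v, hv, hn⟩ := hC (x - w)
  rw [map_sub] at hv hn
  set u := T (A x) - A x with hu
  have h1 : T (A x) - A w = u + A v := by rw [hv, hu]; abel
  rw [h1, ← hv, norm_add_sq_real, ← ContinuousLinearMap.adjoint_inner_left] at h
  have h2 := (abs_le.mp (abs_real_inner_le_norm (ContinuousLinearMap.adjoint A u) v)).1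
  have h3 := mul_le_mul_of_nonneg_left hn (norm_nonneg (ContinuousLinearMap.adjoint A u))
  linarith

/-- Suppose `A` has closed range, `T` is ρ-SQNE with `im A ∩ Fix T ≠ ∅`,
`S ⊆ H₂` is nonempty and bounded, `T` is regular over `S`, and the family `{im A, Fix T}` is
regular over `S`. Then the Landweber operator `L{T}` is regular over `A⁻¹(S)`. -/
theorem landweber_regular
    {H₁ H₂ : Type*} [NormedAddCommGroup H₁] [InnerProductSpace ℝ H₁] [CompleteSpace H₁]
    [NormedAddCommGroup H₂] [InnerProductSpace ℝ H₂] [CompleteSpace H₂]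
    (A : H₁ →L[ℝ] H₂) (hA : A ≠ 0)
    (hclosed : IsClosed (Set.range A))
    (ρ : ℝ) (hρ : 0 ≤ ρ) (T : H₂ → H₂)
    (hT : ∀ x : H₂, ∀ z ∈ Function.fixedPoints T,
      ‖T x - z‖ ^ 2 ≤ ‖x - z‖ ^ 2 - ρ * ‖T x - x‖ ^ 2)
    (hfix : (Set.range A ∩ Function.fixedPoints T).Nonempty)
    (S : Set H₂) (hS : S.Nonempty) (hSbdd : Bornology.IsBounded S)
    (hTreg : ∀ (y : ℕ → H₂), (∀ k, y k ∈ S) →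
      Tendsto (fun k => ‖T (y k) - y k‖) atTop (𝓝 0) →
      Tendsto (fun k => infDist (y k) (Function.fixedPoints T)) atTop (𝓝 0))
    (hfamreg : ∀ (y : ℕ → H₂), (∀ k, y k ∈ S) →
      Tendsto (fun k => max (infDist (y k) (Set.range A))
        (infDist (y k) (Function.fixedPoints T))) atTop (𝓝 0) →
      Tendsto (fun k => infDist (y k) (Set.range A ∩ Function.fixedPoints T))
        atTop (𝓝 0)) :
    ∀ (x : ℕ → H₁), (∀ k, x k ∈ A ⁻¹' S) →
      Tendsto (fun k => ‖landweber A T (x k) - x k‖) atTop (𝓝 0) →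
      Tendsto (fun k => infDist (x k) (Function.fixedPoints (landweber A T)))
        atTop (𝓝 0) := by
  intro x hx hL
  obtain ⟨C, hC0, hC⟩ := exists_preimage_bound_of_isClosed_range A hclosed
  obtain ⟨_, ⟨w, rfl⟩, hw⟩ := id hfix
  obtain ⟨M, hM⟩ := hSbdd.subset_closedBall (A w)
  have hApos : 0 < ‖A‖ ^ 2 := by positivity
  have hadj : Tendsto (fun k => ‖ContinuousLinearMap.adjoint A (T (A (x k)) - A (x k))‖)
      atTop (𝓝 0) := by
    have h := hL.const_mul (‖A‖ ^ 2)
    rw [mul_zero] at h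
    refine h.congr fun k => ?_
    rw [landweber, add_sub_cancel_left, norm_smul, Real.norm_of_nonneg (inv_nonneg.2 hApos.le),
      mul_inv_cancel_left₀ hApos.ne']
  have hres : Tendsto (fun k => ‖T (A (x k)) - A (x k)‖) atTop (𝓝 0) := by
    have hsq : Tendsto (fun k => ‖T (A (x k)) - A (x k)‖ ^ 2) atTop (𝓝 0) := by
      have h := (hadj.const_mul 2).mul_const (C * M)
      rw [mul_zero, zero_mul] at h
      refine squeeze_zero (fun k => by positivity) (fun k => ?_) h
      have hle : ‖A (x k) - A w‖ ≤ M := by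
        simpa [mem_closedBall, dist_eq_norm] using hM (hx k)
      refine (norm_sq_residual_le A T hC (x k) w ?_).trans (by gcongr)
      exact (hT _ _ hw).trans (sub_le_self _ (by positivity))
    simpa using hsq.sqrt
  have hdist : Tendsto
      (fun k => infDist (A (x k)) (Set.range A ∩ Function.fixedPoints T)) atTop (𝓝 0) := by
    refine hfamreg _ hx ((hTreg _ hx hres).congr fun k => ?_)
    rw [infDist_zero_of_mem (Set.mem_range_self (x k)), max_eq_right infDist_nonneg]
  have hlim := hdist.const_mul C
  rw [mul_zero] at hlim
  refine squeeze_zero (fun k => infDist_nonneg) (fun k => ?_) hlim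
  rw [← div_le_iff₀' hC0, le_infDist hfix]
  rintro _ ⟨⟨w', rfl⟩, hw'⟩
  obtain ⟨v, hv, hn⟩ := hC (x k - w')
  rw [map_sub] at hv hn
  have hmem : x k - v ∈ Function.fixedPoints (landweber A T) := by
    have hAv : A (x k - v) = A w' := by rw [map_sub, hv, sub_sub_cancel]
    have hTw : T (A w') = A w' := hw'
    show landweber A T (x k - v) = x k - v
    rw [landweber, hAv, hTw, sub_self, map_zero, smul_zero, add_zero]
  rw [div_le_iff₀' hC0, dist_eq_norm]
  refine (infDist_le_dist_of_mem hmem).trans ?_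
  rwa [dist_eq_norm, sub_sub_cancel]
end

section
/- Let A : H₁ → H₂ be a nonzero bounded linear operator between real Hilbert spaces with adjoint A*, let ρ ≥ 0, let T : H₂ → H₂ be ρ-strongly quasi-nonexpansive with im A ∩ Fix T ≠ ∅, let λ ∈ (0,1], and let σ : H₁ → [1,∞) be an extrapolation function satisfying σ(x) ≤ τ(x) for all x, where τ(x) := (‖A‖·‖T(Ax) − Ax‖ / ‖A*(T(Ax) − Ax)‖)² if Ax ∉ Fix T, and τ(x) := 1 if Ax ∈ Fix T. Then the operator L_{λσ}{T} : H₁ → H₁ defined by L_{λσ}{T}x := x + λσ(x)(L{T}x − x), where L{T} is the Landweber operator of T, is ρ-strongly quasi-nonexpansive and Fix L_{λσ}{T} = A⁻¹(Fix T). -/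
open scoped Classical

/-- The extrapolation bound
`τ(x) = (‖A‖ ‖T(Ax) − Ax‖ / ‖A*(T(Ax) − Ax)‖)²` if `Ax ∉ Fix T`, and `1` otherwise. -/
noncomputable def tauExt {H₁ H₂ : Type*}
    [NormedAddCommGroup H₁] [InnerProductSpace ℝ H₁] [CompleteSpace H₁]
    [NormedAddCommGroup H₂] [InnerProductSpace ℝ H₂] [CompleteSpace H₂]
    (A : H₁ →L[ℝ] H₂) (T : H₂ → H₂) (x : H₁) : ℝ :=
  if T (A x) = A x then 1
  else (‖A‖ * ‖T (A x) - A x‖ /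
    ‖(ContinuousLinearMap.adjoint A) (T (A x) - A x)‖) ^ 2

/-- If `T` is ρ-SQNE with `im A ∩ Fix T ≠ ∅`, `λ ∈ (0,1]` and
`σ : H₁ → [1,∞)` satisfies `σ ≤ τ`, then the extrapolated Landweber operator
`L_{λσ}{T}x = x + λσ(x)(L{T}x − x)` is ρ-SQNE and `Fix L_{λσ}{T} = A⁻¹(Fix T)`. -/
theorem extrapolated_landweber_sqne
    {H₁ H₂ : Type*} [NormedAddCommGroup H₁] [InnerProductSpace ℝ H₁] [CompleteSpace H₁]
    [NormedAddCommGroup H₂] [InnerProductSpace ℝ H₂] [CompleteSpace H₂]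
    (A : H₁ →L[ℝ] H₂) (hA : A ≠ 0) (ρ : ℝ) (hρ : 0 ≤ ρ) (T : H₂ → H₂)
    (hT : ∀ x : H₂, ∀ z ∈ Function.fixedPoints T,
      ‖T x - z‖ ^ 2 ≤ ‖x - z‖ ^ 2 - ρ * ‖T x - x‖ ^ 2)
    (hfix : (Set.range A ∩ Function.fixedPoints T).Nonempty)
    (lam : ℝ) (hlam : 0 < lam ∧ lam ≤ 1)
    (σ : H₁ → ℝ) (hσ : ∀ x, 1 ≤ σ x ∧ σ x ≤ tauExt A T x)
    (L : H₁ → H₁) (hL : ∀ x, L x = x + (lam * σ x) • (landweber A T x - x)) :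
    (∀ x : H₁, ∀ z ∈ Function.fixedPoints L,
      ‖L x - z‖ ^ 2 ≤ ‖x - z‖ ^ 2 - ρ * ‖L x - x‖ ^ 2) ∧
    Function.fixedPoints L = A ⁻¹' (Function.fixedPoints T) := by
  have hA0 : 0 < ‖A‖ := norm_pos_iff.mpr hA
  -- If `A*(T(Ax) − Ax) = 0` while `Ax ∉ Fix T`, division by zero makes `τ x = 0`,
  -- which contradicts `1 ≤ σ x ≤ τ x`.
  have hker : ∀ x, ContinuousLinearMap.adjoint A (T (A x) - A x) = 0 → T (A x) = A x := by
    intro x hg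
    by_contra hne
    have h := hσ x
    rw [tauExt, if_neg hne, hg] at h
    simp at h
    linarith
  have hbound : ∀ x, σ x * ‖ContinuousLinearMap.adjoint A (T (A x) - A x)‖ ^ 2
      ≤ ‖A‖ ^ 2 * ‖T (A x) - A x‖ ^ 2 := by
    intro x
    by_cases hx : T (A x) = A x
    · simp [hx]
    · have hg : 0 < ‖ContinuousLinearMap.adjoint A (T (A x) - A x)‖ :=
        norm_pos_iff.mpr fun h => hx (hker x h)
      have h := (hσ x).2
      rw [tauExt, if_neg hx, div_pow, le_div_iff₀ (by positivity), mul_pow] at h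
      exact h
  have hstep : ∀ x, L x = x + (lam * σ x * (‖A‖ ^ 2)⁻¹) •
      ContinuousLinearMap.adjoint A (T (A x) - A x) := by
    intro x
    rw [hL, landweber, add_sub_cancel_left, smul_smul]
  have hc : ∀ x, 0 < lam * σ x * (‖A‖ ^ 2)⁻¹ := by
    intro x
    have h1 := hlam.1
    have h2 : 0 < σ x := lt_of_lt_of_le one_pos (hσ x).1
    positivity
  have hFix : Function.fixedPoints L = A ⁻¹' (Function.fixedPoints T) := by
    ext x
    simp only [Set.mem_preimage, Function.mem_fixedPoints, Function.IsFixedPt]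
    rw [hstep, add_eq_left, smul_eq_zero]
    constructor
    · rintro (h | h)
      · exact absurd h (hc x).ne'
      · exact hker x h
    · intro h
      right
      simp [h]
  refine ⟨fun x z hz => ?_, hFix⟩
  rw [hFix] at hz
  have hTx := hT (A x) (A z) hz
  have hcx := hc x
  have hcg : (lam * σ x * (‖A‖ ^ 2)⁻¹) *
      ‖ContinuousLinearMap.adjoint A (T (A x) - A x)‖ ^ 2 ≤ ‖T (A x) - A x‖ ^ 2 := by
    have h := hbound x
    have h2 : lam * (σ x * ‖ContinuousLinearMap.adjoint A (T (A x) - A x)‖ ^ 2)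
        ≤ 1 * (‖A‖ ^ 2 * ‖T (A x) - A x‖ ^ 2) :=
      mul_le_mul hlam.2 h (mul_nonneg (by linarith [(hσ x).1]) (sq_nonneg _)) zero_le_one
    rw [← div_eq_mul_inv, div_mul_eq_mul_div, div_le_iff₀ (by positivity)]
    linarith
  have hinner : inner ℝ (x - z) (ContinuousLinearMap.adjoint A (T (A x) - A x))
      = inner ℝ (A x - A z) (T (A x) - A x) := by
    rw [ContinuousLinearMap.adjoint_inner_right, map_sub]
  have hLx : L x - z = (x - z) + (lam * σ x * (‖A‖ ^ 2)⁻¹) •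
      ContinuousLinearMap.adjoint A (T (A x) - A x) := by
    rw [hstep]; abel
  have hLd : L x - x = (lam * σ x * (‖A‖ ^ 2)⁻¹) •
      ContinuousLinearMap.adjoint A (T (A x) - A x) := by
    rw [hstep, add_sub_cancel_left]
  have hTd : T (A x) - A z = (A x - A z) + (T (A x) - A x) := by abel
  rw [hTd, norm_add_sq_real, ← hinner] at hTx
  rw [hLx, hLd, norm_add_sq_real, inner_smul_right, norm_smul, mul_pow, Real.norm_eq_abs, sq_abs]
  generalize lam * σ x * (‖A‖ ^ 2)⁻¹ = c at *
  generalize ‖ContinuousLinearMap.adjoint A (T (A x) - A x)‖ ^ 2 = g at *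
  generalize inner ℝ (x - z) (ContinuousLinearMap.adjoint A (T (A x) - A x)) = i at *
  generalize ‖T (A x) - A x‖ ^ 2 = d at *
  have h1 : 2 * i + (1 + ρ) * d ≤ 0 := by linarith
  have h2 : 0 ≤ c * (1 + ρ) * (d - c * g) :=
    mul_nonneg (mul_nonneg hcx.le (by linarith)) (by linarith)
  have h3 := mul_nonpos_of_nonneg_of_nonpos hcx.le h1
  linarith
end

section
/- Let A : H₁ → H₂ be a nonzero bounded linear operator between real Hilbert spaces with adjoint A* and closed range, let S : H₁ → H₁ be ρ_S-strongly quasi-nonexpansive and T : H₂ → H₂ be ρ_T-strongly quasi-nonexpansive with ρ_S, ρ_T > 0, and assume F := Fix S ∩ A⁻¹(Fix T) ≠ ∅. Let ε ∈ (0,1), let λ_k ∈ [ε,1] for all k, let σ : H₁ → [1,∞) satisfy σ(x) ≤ τ(x) for all x, where τ(x) := (‖A‖·‖T(Ax) − Ax‖ / ‖A*(T(Ax) − Ax)‖)² if Ax ∉ Fix T and τ(x) := 1 otherwise, and define the iteration x₀ ∈ H₁, x_{k+1} := S(x_k + λ_k (σ(x_k)/‖A‖²) A*(T(Ax_k) −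 Ax_k)). If S and T are both boundedly linearly regular, and the two families of sets {im A, Fix T} and {Fix S, A⁻¹(Fix T)} are boundedly linearly regular, then there exist q ∈ (0,1) (possibly depending on x₀) and x∞ ∈ F such that d(x_{k+1}, F) ≤ q·d(x_k, F) for all k and ‖x_k − x∞‖ ≤ 2 d(x₀, F) q^k for all k; in particular (x_k) converges to x∞ at least linearly. -/
/-!
Write `C = A⁻¹(Fix T)` and `y_k = x_k + λ_k (σ(x_k)/‖A‖²) A*(T(Ax_k) − Ax_k)`, so that
`x_{k+1} = S y_k`. Since `σ ≤ τ`, the extrapolated Landweber step `x_k ↦ y_k` is `ρ_T`-SQNE with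
respect to `C`, and it decreases the squared distance to points of `C` by at least a multiple of
`‖T(Ax_k) − Ax_k‖²` (`landweber_step`). Together with the SQNE property of `S`, for `z ∈ F` the
quantity `‖x_k − z‖²` therefore drops by a multiple of
`‖T(Ax_k) − Ax_k‖² + ‖y_k − x_k‖² + ‖S y_k − y_k‖²`.

These residuals bound `d(x_k, F)`: the distance to `C` is controlled by the first one through the
open mapping theorem (`exists_infDist_preimage_le`) and the regularity of `{im A, Fix T}` and of
`T`; the distance to `Fix S` is controlled by the other two through the regularity of `S`; and
`{Fix S, C}` is regular. Hence `‖x_{k+1} − z‖² ≤ ‖x_k − z‖² − μ d(x_k, F)²` for all `z ∈ F`, which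
gives linear convergence with `q = √(1 − μ)` by `linear_convergence_of_fejer`.
-/

open Filter Topology Metric
open scoped Classical

/-- Quasi-nonexpansiveness forces the fixed point set to be closed. -/
lemma isClosed_fixedPoints_of_sqne {H : Type*} [NormedAddCommGroup H]
    (S : H → H) (ρ : ℝ) (hρ : 0 < ρ)
    (hS : ∀ x : H, ∀ z ∈ Function.fixedPoints S,
      ‖S x - z‖ ^ 2 ≤ ‖x - z‖ ^ 2 - ρ * ‖S x - x‖ ^ 2) :
    IsClosed (Function.fixedPoints S) := by
  rw [← closure_subset_iff_isClosed]
  intro w hw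
  obtain ⟨u, hu, hlim⟩ := mem_closure_iff_seq_limit.1 hw
  have h1 : Tendsto (fun n => ‖S w - u n‖ ^ 2) atTop (𝓝 (‖S w - w‖ ^ 2)) :=
    ((tendsto_const_nhds.sub hlim).norm).pow 2
  have h2 : Tendsto (fun n => ‖w - u n‖ ^ 2 - ρ * ‖S w - w‖ ^ 2) atTop
      (𝓝 (‖w - w‖ ^ 2 - ρ * ‖S w - w‖ ^ 2)) :=
    (((tendsto_const_nhds.sub hlim).norm).pow 2).sub_const _
  have h3 := le_of_tendsto_of_tendsto' h1 h2 (fun n => hS w (u n) (hu n))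
  simp only [sub_self, norm_zero] at h3
  have h4 : ‖S w - w‖ ^ 2 = 0 := by nlinarith [sq_nonneg ‖S w - w‖]
  exact sub_eq_zero.1 (norm_eq_zero.1 (pow_eq_zero_iff (two_ne_zero) |>.1 h4))

/-- By the open mapping theorem onto its range, an operator with closed range controls the distance
to a preimage `A⁻¹(Q)` by the distance of the image point to `im A ∩ Q`. -/
lemma exists_infDist_preimage_le {H₁ H₂ : Type*}
    [NormedAddCommGroup H₁] [InnerProductSpace ℝ H₁] [CompleteSpace H₁]
    [NormedAddCommGroup H₂] [InnerProductSpace ℝ H₂] [CompleteSpace H₂]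
    (A : H₁ →L[ℝ] H₂) (hclosed : IsClosed (Set.range A)) (Q : Set H₂)
    (hQ : (Set.range A ∩ Q).Nonempty) :
    ∃ c > 0, ∀ x, infDist x (A ⁻¹' Q) ≤ c * infDist (A x) (Set.range A ∩ Q) := by
  have hcl : IsClosed ((A : H₁ →ₗ[ℝ] H₂).range : Set H₂) := hclosed
  have : CompleteSpace (A : H₁ →ₗ[ℝ] H₂).range := hcl.completeSpace_coe
  obtain ⟨c, hc, h⟩ := ContinuousLinearMap.exists_preimage_norm_le
    (A.rangeRestrict) (LinearMap.surjective_rangeRestrict (A : H₁ →ₗ[ℝ] H₂))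
  refine ⟨c, hc, fun x => ?_⟩
  rw [← div_le_iff₀' hc]
  refine (le_infDist hQ).2 ?_
  rintro _ ⟨⟨w, rfl⟩, hw⟩
  obtain ⟨u, hu, hun⟩ := h (A.rangeRestrict (w - x))
  have hu' : A u = A (w - x) := congrArg Subtype.val hu
  rw [div_le_iff₀' hc]
  have hmem : x + u ∈ A ⁻¹' Q := by simpa [hu'] using hw
  refine (infDist_le_dist_of_mem hmem).trans ?_
  have e1 : dist x (x + u) = ‖u‖ := by simp
  have e2 : dist (A x) (A w) = ‖A.rangeRestrict (w - x)‖ := by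
    rw [dist_comm, dist_eq_norm, ← map_sub]; rfl
  rw [e1, e2]; exact hun

/-- The extrapolated Landweber step is `ρ`-SQNE with respect to `A⁻¹(Fix T)`, and it also decreases
the distances by a multiple of the residual of `T`. The bound `σ ≤ τ` enters through
`s ‖A* p‖² ≤ ‖A‖² ‖p‖²`, where `p = T(Ax) − Ax`. -/
lemma landweber_step {H₁ H₂ : Type*}
    [NormedAddCommGroup H₁] [InnerProductSpace ℝ H₁] [CompleteSpace H₁]
    [NormedAddCommGroup H₂] [InnerProductSpace ℝ H₂] [CompleteSpace H₂]
    (A : H₁ →L[ℝ] H₂) (hA : A ≠ 0) (T : H₂ → H₂) (ρ : ℝ) (hρ : 0 < ρ)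
    (hT : ∀ y : H₂, ∀ z ∈ Function.fixedPoints T,
      ‖T y - z‖ ^ 2 ≤ ‖y - z‖ ^ 2 - ρ * ‖T y - y‖ ^ 2)
    (ε l s : ℝ) (hε : 0 < ε) (hl : ε ≤ l) (hl1 : l ≤ 1) (x : H₁)
    (hs : 1 ≤ s) (hs' : s ≤ tauExt A T x) (z : H₁) (hz : A z ∈ Function.fixedPoints T) (y : H₁)
    (hy : y = x + (l * s / ‖A‖ ^ 2) • (ContinuousLinearMap.adjoint A) (T (A x) - A x)) :
    ‖y - z‖ ^ 2 ≤ ‖x - z‖ ^ 2 - ρ * (ε / ‖A‖ ^ 2) * ‖T (A x) - A x‖ ^ 2 ∧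
    ‖y - z‖ ^ 2 ≤ ‖x - z‖ ^ 2 - ρ * ‖y - x‖ ^ 2 := by
  have ha : 0 < ‖A‖ ^ 2 := by have := norm_pos_iff.2 hA; positivity
  set p := T (A x) - A x with hp
  set g := (ContinuousLinearMap.adjoint A) p with hg
  set t := l * s / ‖A‖ ^ 2 with ht
  have hs0 : 0 < s := by linarith
  have hl0 : 0 < l := by linarith
  have ht0 : 0 < t := by positivity
  have hεt : ε / ‖A‖ ^ 2 ≤ t := by
    rw [ht]; gcongr; nlinarith
  have hinner : (1 + ρ) * ‖p‖ ^ 2 ≤ - (2 * inner ℝ g (x - z)) := by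
    have h1 := hT (A x) (A z) hz
    have e : T (A x) - A z = p + (A x - A z) := by rw [hp]; abel
    rw [e, norm_add_sq_real, ← hp] at h1
    have e2 : inner ℝ g (x - z) = inner ℝ p (A x - A z) := by
      rw [hg, ContinuousLinearMap.adjoint_inner_left, map_sub]
    rw [e2]; linarith
  have hsg : s * ‖g‖ ^ 2 ≤ ‖A‖ ^ 2 * ‖p‖ ^ 2 := by
    by_cases hg0 : g = 0
    · rw [hg0]; simp; positivity
    · have hfix : ¬ T (A x) = A x := by
        intro h; apply hg0; rw [hg, hp, h]; simp
      rw [tauExt, if_neg hfix, ← hp, ← hg, div_pow] at hs'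
      have : 0 < ‖g‖ ^ 2 := by have := norm_pos_iff.2 hg0; positivity
      rw [le_div_iff₀ this] at hs'
      nlinarith
  have htg : t * ‖g‖ ^ 2 ≤ ‖p‖ ^ 2 := by
    have e : t * ‖g‖ ^ 2 = l * (s * ‖g‖ ^ 2) / ‖A‖ ^ 2 := by rw [ht]; ring
    rw [e, div_le_iff₀ ha]
    have : 0 ≤ s * ‖g‖ ^ 2 := by positivity
    nlinarith
  have hyz : ‖y - z‖ ^ 2 = ‖x - z‖ ^ 2 + t * (2 * inner ℝ g (x - z)) + t * (t * ‖g‖ ^ 2) := by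
    have e : y - z = (x - z) + t • g := by rw [hy]; abel
    rw [e, norm_add_sq_real, inner_smul_right, real_inner_comm, norm_smul, mul_pow,
      Real.norm_eq_abs, sq_abs]
    ring
  have hyx : ‖y - x‖ ^ 2 = t * (t * ‖g‖ ^ 2) := by
    rw [hy, add_sub_cancel_left, norm_smul, mul_pow, Real.norm_eq_abs, sq_abs]; ring
  have k1 := mul_le_mul_of_nonneg_left hinner ht0.le
  have k2 := mul_le_mul_of_nonneg_left htg ht0.le
  have main : ‖y - z‖ ^ 2 ≤ ‖x - z‖ ^ 2 - ρ * (t * ‖p‖ ^ 2) := by rw [hyz]; nlinarith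
  constructor
  · have := mul_le_mul_of_nonneg_left (mul_le_mul_of_nonneg_right hεt (sq_nonneg ‖p‖)) hρ.le
    nlinarith
  · rw [hyx]
    have := mul_le_mul_of_nonneg_left k2 hρ.le
    linarith

/-- A sequence that is Fejér monotone with respect to a closed set `F`, with squared decrease at
least `μ d(x_k, F)²`, converges linearly to a point of `F`. -/
lemma linear_convergence_of_fejer {H : Type*} [NormedAddCommGroup H] [CompleteSpace H]
    (F : Set H) (hFc : IsClosed F) (hFne : F.Nonempty) (x : ℕ → H) (μ : ℝ) (hμ : 0 < μ)
    (hμ1 : μ < 1)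
    (h : ∀ k, ∀ z ∈ F, ‖x (k + 1) - z‖ ^ 2 ≤ ‖x k - z‖ ^ 2 - μ * infDist (x k) F ^ 2) :
    ∃ q : ℝ, 0 < q ∧ q < 1 ∧ ∃ xlim ∈ F,
      (∀ k, infDist (x (k + 1)) F ≤ q * infDist (x k) F) ∧
      (∀ k, ‖x k - xlim‖ ≤ 2 * infDist (x 0) F * q ^ k) ∧
      Tendsto x atTop (𝓝 xlim) := by
  have hq0 : 0 < √(1 - μ) := Real.sqrt_pos.2 (by linarith)
  have hqs : √(1 - μ) ^ 2 = 1 - μ := Real.sq_sqrt (by linarith)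
  set q := √(1 - μ) with hq
  have hq1 : q < 1 := by nlinarith
  have hdec : ∀ k, infDist (x (k + 1)) F ≤ q * infDist (x k) F := by
    intro k
    have h1 : √(infDist (x (k + 1)) F ^ 2 + μ * infDist (x k) F ^ 2) ≤ infDist (x k) F := by
      refine (le_infDist hFne).2 fun z hz => ?_
      refine Real.sqrt_le_iff.2 ⟨dist_nonneg, ?_⟩
      have h2 : infDist (x (k + 1)) F ≤ ‖x (k + 1) - z‖ := by
        rw [← dist_eq_norm]; exact infDist_le_dist_of_mem hz
      have h3 := h k z hz
      have h4 := pow_le_pow_left₀ infDist_nonneg h2 2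
      rw [dist_eq_norm]; linarith
    have h5 := (Real.sqrt_le_iff.1 h1).2
    have hn : 0 ≤ infDist (x k) F := infDist_nonneg
    refine le_of_sq_le_sq ?_ (by positivity)
    rw [mul_pow, hqs]; linarith
  have hpow : ∀ k, infDist (x k) F ≤ infDist (x 0) F * q ^ k := by
    intro k
    induction k with
    | zero => simp
    | succ k ih =>
      refine (hdec k).trans ?_
      rw [pow_succ]
      nlinarith [mul_le_mul_of_nonneg_left ih hq0.le]
  have hfej : ∀ z ∈ F, Antitone fun k => ‖x k - z‖ := by
    intro z hz
    refine antitone_nat_of_succ_le fun k => ?_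
    refine le_of_sq_le_sq ?_ (norm_nonneg _)
    have := h k z hz
    nlinarith [sq_nonneg (infDist (x k) F)]
  have hdist : ∀ k m, k ≤ m → dist (x k) (x m) ≤ 2 * infDist (x 0) F * q ^ k := by
    intro k m hkm
    have h1 : dist (x k) (x m) / 2 ≤ infDist (x k) F := by
      refine (le_infDist hFne).2 fun z hz => ?_
      have h2 := dist_triangle_right (x k) (x m) z
      have h3 := hfej z hz hkm
      simp only [← dist_eq_norm] at h3
      linarith
    linarith [hpow k]
  have hlim0 : Tendsto (fun k => 2 * infDist (x 0) F * q ^ k) atTop (𝓝 0) := by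
    simpa using (tendsto_pow_atTop_nhds_zero_of_lt_one hq0.le hq1).const_mul
      (2 * infDist (x 0) F)
  have hcau : CauchySeq x := cauchySeq_of_le_tendsto_0' _ hdist hlim0
  obtain ⟨w, hw⟩ := cauchySeq_tendsto_of_complete hcau
  have hwF : w ∈ F := by
    rw [hFc.mem_iff_infDist_zero hFne]
    have h1 : Tendsto (fun k => infDist (x k) F) atTop (𝓝 (infDist w F)) :=
      ((continuous_infDist_pt F).tendsto w).comp hw
    have h2 : Tendsto (fun k => infDist (x k) F) atTop (𝓝 0) := by
      refine squeeze_zero (fun _ => infDist_nonneg) hpow ?_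
      simpa using (tendsto_pow_atTop_nhds_zero_of_lt_one hq0.le hq1).const_mul (infDist (x 0) F)
    exact tendsto_nhds_unique h1 h2
  refine ⟨q, hq0, hq1, w, hwF, hdec, fun k => ?_, hw⟩
  rw [← dist_eq_norm]
  refine le_of_tendsto (tendsto_const_nhds.dist hw) ?_
  filter_upwards [eventually_ge_atTop k] with m hm using hdist k m hm

/-- linear convergence of the extrapolated `CQ`-type method
`x_{k+1} = S(x_k + λ_k (σ(x_k)/‖A‖²) A*(T(Ax_k) − Ax_k))` when `A` has closed range, the
SQNE operators `S`, `T` are boundedly linearly regular and the families `{im A, Fix T}` and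
`{Fix S, A⁻¹(Fix T)}` are boundedly linearly regular. -/
theorem cq_method_linear_convergence
    {H₁ H₂ : Type*} [NormedAddCommGroup H₁] [InnerProductSpace ℝ H₁] [CompleteSpace H₁]
    [NormedAddCommGroup H₂] [InnerProductSpace ℝ H₂] [CompleteSpace H₂]
    (A : H₁ →L[ℝ] H₂) (hA : A ≠ 0)
    (hclosed : IsClosed (Set.range A))
    (S : H₁ → H₁) (T : H₂ → H₂) (ρS ρT : ℝ) (hρS : 0 < ρS) (hρT : 0 < ρT)
    (hS : ∀ x : H₁, ∀ z ∈ Function.fixedPoints S,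
      ‖S x - z‖ ^ 2 ≤ ‖x - z‖ ^ 2 - ρS * ‖S x - x‖ ^ 2)
    (hT : ∀ y : H₂, ∀ z ∈ Function.fixedPoints T,
      ‖T y - z‖ ^ 2 ≤ ‖y - z‖ ^ 2 - ρT * ‖T y - y‖ ^ 2)
    (F : Set H₁) (hF : F = Function.fixedPoints S ∩ A ⁻¹' (Function.fixedPoints T))
    (hFne : F.Nonempty)
    (ε : ℝ) (hε : 0 < ε ∧ ε < 1)
    (lam : ℕ → ℝ) (hlam : ∀ k, ε ≤ lam k ∧ lam k ≤ 1)
    (σ : H₁ → ℝ) (hσ : ∀ x, 1 ≤ σ x ∧ σ x ≤ tauExt A T x)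
    (x : ℕ → H₁)
    (hiter : ∀ k, x (k + 1) =
      S (x k + (lam k * σ (x k) / ‖A‖ ^ 2) •
        (ContinuousLinearMap.adjoint A) (T (A (x k)) - A (x k))))
    (hSreg : ∀ B : Set H₁, Bornology.IsBounded B → ∃ δ > 0,
      ∀ y ∈ B, ‖S y - y‖ ≥ δ * infDist y (Function.fixedPoints S))
    (hTreg : ∀ B : Set H₂, Bornology.IsBounded B → ∃ δ > 0,
      ∀ y ∈ B, ‖T y - y‖ ≥ δ * infDist y (Function.fixedPoints T))
    (hfam1 : ∀ B : Set H₂, Bornology.IsBounded B → ∃ κ > 0,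
      ∀ y ∈ B, infDist y (Set.range A ∩ Function.fixedPoints T) ≤
        κ * max (infDist y (Set.range A)) (infDist y (Function.fixedPoints T)))
    (hfam2 : ∀ B : Set H₁, Bornology.IsBounded B → ∃ κ > 0,
      ∀ y ∈ B, infDist y F ≤
        κ * max (infDist y (Function.fixedPoints S))
          (infDist y (A ⁻¹' (Function.fixedPoints T)))) :
    ∃ q : ℝ, 0 < q ∧ q < 1 ∧ ∃ xlim ∈ F,
      (∀ k, infDist (x (k + 1)) F ≤ q * infDist (x k) F) ∧
      (∀ k, ‖x k - xlim‖ ≤ 2 * infDist (x 0) F * q ^ k) ∧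
      Tendsto x atTop (𝓝 xlim) := by
  have ha : 0 < ‖A‖ := norm_pos_iff.2 hA
  have hFS : F ⊆ Function.fixedPoints S := hF ▸ Set.inter_subset_left
  have hFT : F ⊆ A ⁻¹' Function.fixedPoints T := hF ▸ Set.inter_subset_right
  have hFc : IsClosed F := by
    rw [hF]
    exact (isClosed_fixedPoints_of_sqne S ρS hρS hS).inter
      ((isClosed_fixedPoints_of_sqne T ρT hρT hT).preimage A.continuous)
  obtain ⟨z₀, hz₀⟩ := hFne
  obtain ⟨c, hc, hpre⟩ := exists_infDist_preimage_le A hclosed (Function.fixedPoints T)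
    ⟨A z₀, ⟨z₀, rfl⟩, hFT hz₀⟩
  obtain ⟨y, hy⟩ : ∃ y : ℕ → H₁, ∀ k, y k = x k + (lam k * σ (x k) / ‖A‖ ^ 2) •
        (ContinuousLinearMap.adjoint A) (T (A (x k)) - A (x k)) := ⟨_, fun _ => rfl⟩
  have hstep := fun k z (hz : z ∈ F) => landweber_step A hA T ρT hρT hT ε (lam k) (σ (x k)) hε.1
    (hlam k).1 (hlam k).2 (x k) (hσ (x k)).1 (hσ (x k)).2 z (hFT hz) (y k) (hy k)
  have hxy : ∀ k, x (k + 1) = S (y k) := fun k => by rw [hiter, hy]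
  have hSstep := fun k z (hz : z ∈ F) => hS (y k) z (hFS hz)
  -- Fejér monotonicity keeps both `x k` and `y k` in a fixed ball around a point of `F`.
  have hyx : ∀ k, ‖y k - z₀‖ ≤ ‖x k - z₀‖ := fun k => by
    refine le_of_sq_le_sq ?_ (norm_nonneg _)
    have := (hstep k z₀ hz₀).2
    have : 0 ≤ ρT * ‖y k - x k‖ ^ 2 := by positivity
    linarith
  have hxB : ∀ k, ‖x k - z₀‖ ≤ ‖x 0 - z₀‖ := by
    intro k
    induction k with
    | zero => exact le_rfl
    | succ k ih =>
      refine le_trans ?_ ((hyx k).trans ih)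
      refine le_of_sq_le_sq ?_ (norm_nonneg _)
      have h1 := hSstep k z₀ hz₀
      have : 0 ≤ ρS * ‖S (y k) - y k‖ ^ 2 := by positivity
      rw [hxy]; linarith
  have hxmem : ∀ k, x k ∈ closedBall z₀ ‖x 0 - z₀‖ := fun k => by
    rw [mem_closedBall, dist_eq_norm]; exact hxB k
  have hymem : ∀ k, y k ∈ closedBall z₀ ‖x 0 - z₀‖ := fun k => by
    rw [mem_closedBall, dist_eq_norm]; exact (hyx k).trans (hxB k)
  have hAmem : ∀ k, A (x k) ∈ A '' closedBall z₀ ‖x 0 - z₀‖ := fun k => ⟨_, hxmem k, rfl⟩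
  have hAbdd : Bornology.IsBounded (A '' closedBall z₀ ‖x 0 - z₀‖) :=
    A.lipschitz.isBounded_image isBounded_closedBall
  obtain ⟨δS, hδS, hS'⟩ := hSreg _ (isBounded_closedBall (x := z₀) (r := ‖x 0 - z₀‖))
  obtain ⟨δT, hδT, hT'⟩ := hTreg _ hAbdd
  obtain ⟨κ₁, hκ₁, hf1⟩ := hfam1 _ hAbdd
  obtain ⟨κ₂, hκ₂, hf2⟩ := hfam2 _ (isBounded_closedBall (x := z₀) (r := ‖x 0 - z₀‖))
  have hC : ∀ k, infDist (x k) (A ⁻¹' Function.fixedPoints T) ≤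
      c * κ₁ / δT * ‖T (A (x k)) - A (x k)‖ := by
    intro k
    have h1 := hpre (x k)
    have h2 := hf1 _ (hAmem k)
    have h3 := hT' _ (hAmem k)
    rw [infDist_zero_of_mem (Set.mem_range_self (x k)), max_eq_right infDist_nonneg] at h2
    have h4 : infDist (A (x k)) (Function.fixedPoints T) ≤ ‖T (A (x k)) - A (x k)‖ / δT := by
      rw [le_div_iff₀' hδT]; exact h3
    calc _ ≤ c * (κ₁ * (‖T (A (x k)) - A (x k)‖ / δT)) :=
          h1.trans (by gcongr; exact h2.trans (by gcongr))
      _ = _ := by ring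
  have hFix : ∀ k, infDist (x k) (Function.fixedPoints S) ≤
      ‖y k - x k‖ + 1 / δS * ‖S (y k) - y k‖ := by
    intro k
    have h1 : infDist (x k) (Function.fixedPoints S) ≤
      infDist (y k) (Function.fixedPoints S) + dist (x k) (y k) := infDist_le_infDist_add_dist
    have h2 : infDist (y k) (Function.fixedPoints S) ≤ ‖S (y k) - y k‖ / δS := by
      rw [le_div_iff₀' hδS]; exact hS' _ (hymem k)
    rw [dist_comm, dist_eq_norm] at h1
    rw [one_div_mul_eq_div]; linarith
  set M := κ₂ * (c * κ₁ / δT + 1 + 1 / δS) with hM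
  have hM0 : 0 < M := by positivity
  have hD : ∀ k, infDist (x k) F ≤
      M * (‖T (A (x k)) - A (x k)‖ + ‖y k - x k‖ + ‖S (y k) - y k‖) := by
    intro k
    refine (hf2 _ (hxmem k)).trans ?_
    rw [hM, mul_assoc]
    have b1 : 0 ≤ c * κ₁ / δT := by positivity
    have b2 : 0 ≤ 1 / δS := by positivity
    have n1 := norm_nonneg (T (A (x k)) - A (x k))
    have n2 := norm_nonneg (y k - x k)
    have n3 := norm_nonneg (S (y k) - y k)
    gcongr
    refine max_le ((hFix k).trans ?_) ((hC k).trans ?_)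
    · nlinarith [mul_nonneg b1 n1, mul_nonneg b1 n2, mul_nonneg b1 n3, mul_nonneg b2 n1,
        mul_nonneg b2 n2]
    · nlinarith [mul_nonneg b1 n2, mul_nonneg b1 n3, mul_nonneg b2 n1, mul_nonneg b2 n2,
        mul_nonneg b2 n3]
  -- `ν` is a common lower bound for the weights of the three squared residuals, the decrease of
  -- the Landweber step being the average of its two estimates.
  obtain ⟨ν, hν, hν1, hν2, hν3⟩ : ∃ ν > 0, ν ≤ ρT * (ε / ‖A‖ ^ 2) / 2 ∧ ν ≤ ρT / 2 ∧ ν ≤ ρS := by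
    have hε0 := hε.1
    exact ⟨min (ρT * (ε / ‖A‖ ^ 2) / 2) (min (ρT / 2) ρS), by positivity, min_le_left _ _,
      (min_le_right _ _).trans (min_le_left _ _), (min_le_right _ _).trans (min_le_right _ _)⟩
  have hμ0 : 0 < min (1 / 2) (ν / (3 * M ^ 2)) := by positivity
  refine linear_convergence_of_fejer F hFc ⟨z₀, hz₀⟩ x (min (1 / 2) (ν / (3 * M ^ 2))) hμ0
    ((min_le_left _ _).trans_lt (by norm_num)) fun k z hz => ?_
  obtain ⟨h1, h2⟩ := hstep k z hz
  have h3 := hSstep k z hz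
  rw [hxy]
  have hDk := hD k
  have hd0 : 0 ≤ infDist (x k) F := infDist_nonneg
  generalize infDist (x k) F = d at hDk hd0 ⊢
  generalize ‖T (A (x k)) - A (x k)‖ = P at *
  generalize ‖y k - x k‖ = Q at *
  generalize ‖S (y k) - y k‖ = R at *
  have hdsq : d ^ 2 ≤ 3 * M ^ 2 * (P ^ 2 + Q ^ 2 + R ^ 2) := by
    have e := pow_le_pow_left₀ hd0 hDk 2
    have e' : (P + Q + R) ^ 2 ≤ 3 * (P ^ 2 + Q ^ 2 + R ^ 2) := by
      nlinarith [sq_nonneg (P - Q), sq_nonneg (Q - R), sq_nonneg (P - R)]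
    have := mul_le_mul_of_nonneg_left e' (sq_nonneg M)
    rw [mul_pow] at e
    linarith
  have hfin : min (1 / 2) (ν / (3 * M ^ 2)) * d ^ 2 ≤ ν * (P ^ 2 + Q ^ 2 + R ^ 2) := by
    calc _ ≤ ν / (3 * M ^ 2) * (3 * M ^ 2 * (P ^ 2 + Q ^ 2 + R ^ 2)) :=
          mul_le_mul (min_le_right _ _) hdsq (sq_nonneg d) (by positivity)
      _ = _ := by field_simp
  have w1 := mul_le_mul_of_nonneg_right hν1 (sq_nonneg P)
  have w2 := mul_le_mul_of_nonneg_right hν2 (sq_nonneg Q)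
  have w3 := mul_le_mul_of_nonneg_right hν3 (sq_nonneg R)
  linarith
end
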